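/- arXiv:2202.07286 — 3 statements merged into one kernel-verified Lean document; each statement's English description precedes it below -/
import Mathlib

section
/- Let k be an integer with k ≥ 2 and let a be a real number with a > 0. Then the Lebesgue (Bochner) integral over ℝ of the complex-valued function x ↦ e^{−i·a·x} / (x + i)^k equals −2πi · (−i·a)^{k−1} · e^{−a} / (k−1)!, where i is the imaginary unit; that is, ∫_ℝ e^{−iax}(x+i)^{−k} dx = −2πi·(−ia)^{k−1}·e^{−a}/(k−1)!. -/
/-!
Up to scaling, `x ↦ (x + i)^{-k}` is the Fourier transform of the unnormalized Gamma density
`f t = t^{k-1} e^{-t}` (for `t > 0`, and `0` for `t ≤ 0`): the Laplace integral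
`∫_0^∞ t^n e^{-zt} dt = n! / z^{n+1}` (`integral_pow_mul_cexp`) at `z = 1 + 2πiw` gives
`𝓕 f w = (k-1)! / (1 + 2πiw)^k` (`fourier_gammaDensity`). For `k ≥ 2` the function `f` is
continuous and both `f` and `𝓕 f` are integrable, so Fourier inversion at the point `a > 0` reads
`∫ e^{2πiaw} (k-1)! / (1 + 2πiw)^k dw = a^{k-1} e^{-a}`. The substitution `x = -2πw`, under which
`x + i = i (1 + 2πiw)`, turns this into the required formula.
-/

open MeasureTheory Real
open scoped FourierTransform

/-- The unnormalized Gamma density `t ↦ t^n e^{-t}` on `(0, ∞)`, extended by zero, for `n ≥ 1`.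
Writing it with `max t 0` makes continuity evident. For `n = 0` the convention `0 ^ 0 = 1` makes it
`e^{-t}` on all of `ℝ`, hence the hypotheses `n ≠ 0` below. -/
noncomputable def gammaDensity (n : ℕ) (t : ℝ) : ℂ :=
  ((max t 0 : ℝ) : ℂ) ^ n * Complex.exp (-t)

lemma continuous_gammaDensity (n : ℕ) : Continuous (gammaDensity n) := by
  unfold gammaDensity
  fun_prop

lemma gammaDensity_of_nonneg (n : ℕ) {t : ℝ} (ht : 0 ≤ t) :
    gammaDensity n t = (t : ℂ) ^ n * Complex.exp (-t) := by
  rw [gammaDensity, max_eq_left ht]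

lemma gammaDensity_of_nonpos {n : ℕ} (hn : n ≠ 0) {t : ℝ} (ht : t ≤ 0) :
    gammaDensity n t = 0 := by
  rw [gammaDensity, max_eq_right ht]
  simp [hn]

lemma norm_pow_mul_cexp (n : ℕ) {z : ℂ} (hz : z.re = 1) {t : ℝ} (ht : 0 ≤ t) :
    ‖(t : ℂ) ^ n * Complex.exp (-z * t)‖ = t ^ n * Real.exp (-t) := by
  rw [norm_mul, norm_pow, Complex.norm_exp, Complex.norm_real, Real.norm_of_nonneg ht]
  simp [hz]

lemma integrableOn_pow_mul_cexp (n : ℕ) {z : ℂ} (hz : z.re = 1) :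
    IntegrableOn (fun t : ℝ => (t : ℂ) ^ n * Complex.exp (-z * t)) (Set.Ioi 0) := by
  have h := Real.GammaIntegral_convergent (s := n + 1) (by positivity)
  refine Integrable.mono' h (Continuous.aestronglyMeasurable (by fun_prop)) ?_
  filter_upwards [ae_restrict_mem measurableSet_Ioi] with t ht
  rw [norm_pow_mul_cexp n hz (le_of_lt ht)]
  simp [mul_comm]

/-- The Laplace transform of a monomial, on the line `re z = 1`; each power is reduced to the
previous one by integrating the derivative of `t^{n+1} e^{-zt}`, which vanishes at `0` and `∞`. -/
lemma integral_pow_mul_cexp (n : ℕ) {z : ℂ} (hz : z.re = 1) :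
    ∫ t : ℝ in Set.Ioi 0, (t : ℂ) ^ n * Complex.exp (-z * t) = n.factorial / z ^ (n + 1) := by
  have hz0 : z ≠ 0 := by
    rintro rfl
    simp at hz
  induction n with
  | zero =>
    have := integral_exp_mul_complex_Ioi (a := -z) (by simp [hz]) 0
    simp only [pow_zero, one_mul]
    rw [this]
    simp
  | succ n ih =>
    have hd : ∀ t ∈ Set.Ioi (0 : ℝ),
        HasDerivAt (fun t : ℝ => (t : ℂ) ^ (n + 1) * Complex.exp (-z * t))
          ((n + 1) * ((t : ℂ) ^ n * Complex.exp (-z * t))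
            - z * ((t : ℂ) ^ (n + 1) * Complex.exp (-z * t))) t := by
      intro t _
      have h0 : HasDerivAt (fun t : ℝ => (t : ℂ)) 1 t := Complex.ofRealCLM.hasDerivAt
      have h1 := (h0.pow (n + 1)).mul (h0.const_mul (-z)).cexp
      convert! h1 using 1
      simp
      ring
    have hi := (integrableOn_pow_mul_cexp n hz).const_mul (n + 1 : ℂ)
    have hi' := (integrableOn_pow_mul_cexp (n + 1) hz).const_mul z
    have hlim : Filter.Tendsto (fun t : ℝ => (t : ℂ) ^ (n + 1) * Complex.exp (-z * t))
        Filter.atTop (nhds 0) := by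
      rw [tendsto_zero_iff_norm_tendsto_zero]
      refine (Real.tendsto_pow_mul_exp_neg_atTop_nhds_zero (n + 1)).congr' ?_
      filter_upwards [Filter.eventually_ge_atTop 0] with t ht
      rw [norm_pow_mul_cexp (n + 1) hz ht]
    have key := integral_Ioi_of_hasDerivAt_of_tendsto
      (Continuous.continuousWithinAt (by fun_prop)) hd (hi.sub hi') hlim
    rw [integral_sub hi hi', integral_const_mul, integral_const_mul, ih] at key
    have key' : z * ∫ t : ℝ in Set.Ioi 0, (t : ℂ) ^ (n + 1) * Complex.exp (-z * t)
        = (n + 1) * (n.factorial / z ^ (n + 1)) := by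
      simp at key
      simp
      linear_combination -key
    apply mul_left_cancel₀ hz0
    rw [key', Nat.factorial_succ]
    push_cast
    field_simp
    ring

lemma integrable_gammaDensity {n : ℕ} (hn : n ≠ 0) : Integrable (gammaDensity n) := by
  have h : IntegrableOn (gammaDensity n) (Set.Ioi 0) := by
    refine (integrableOn_pow_mul_cexp n (z := 1) (by simp)).congr_fun ?_ measurableSet_Ioi
    intro t ht
    simp [gammaDensity_of_nonneg n (le_of_lt ht)]
  refine (integrableOn_iff_integrable_of_support_subset ?_).1 h
  intro t ht
  by_contra h'
  exact ht (gammaDensity_of_nonpos hn (not_lt.1 h'))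

lemma fourier_gammaDensity {n : ℕ} (hn : n ≠ 0) (w : ℝ) :
    𝓕 (gammaDensity n) w = n.factorial / (1 + 2 * π * w * Complex.I) ^ (n + 1) := by
  rw [fourier_real_eq_integral_exp_smul,
    ← integral_pow_mul_cexp n (z := 1 + 2 * π * w * Complex.I) (by simp),
    ← setIntegral_eq_integral_of_forall_compl_eq_zero (s := Set.Ioi 0)]
  · refine setIntegral_congr_fun measurableSet_Ioi fun t ht => ?_
    simp only [gammaDensity_of_nonneg n (le_of_lt ht), smul_eq_mul]
    rw [mul_left_comm, ← Complex.exp_add]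
    push_cast
    ring_nf
  · intro t ht
    simp [gammaDensity_of_nonpos hn (not_lt.1 ht)]

/-- `𝓕 f` is `O(|w|^{-(n+1)})` with `n + 1 ≥ 2`, so it is dominated by a multiple of
`(1 + (2πw)²)⁻¹`. -/
lemma integrable_fourier_gammaDensity {n : ℕ} (hn : n ≠ 0) :
    Integrable (𝓕 (gammaDensity n)) := by
  have h := ((integrable_inv_one_add_sq.comp_mul_left'
    (g := fun x : ℝ => (1 + x ^ 2)⁻¹) (R := 2 * π) (by positivity))).const_mul (n.factorial : ℝ)
  have hne (w : ℝ) : (1 + 2 * π * w * Complex.I : ℂ) ≠ 0 := by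
    intro h0
    simpa using congrArg Complex.re h0
  have hF : 𝓕 (gammaDensity n) =
      fun w : ℝ => (n.factorial : ℂ) / (1 + 2 * π * w * Complex.I) ^ (n + 1) :=
    funext (fourier_gammaDensity hn)
  rw [hF]
  refine h.mono' (Continuous.aestronglyMeasurable ?_) (Filter.Eventually.of_forall fun w => ?_)
  · exact Continuous.div (by fun_prop) (by fun_prop) fun w => pow_ne_zero _ (hne w)
  · have hsq : ‖(1 + 2 * π * w * Complex.I : ℂ)‖ ^ 2 = 1 + (2 * π * w) ^ 2 := by
      rw [Complex.sq_norm, Complex.normSq_apply]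
      simp
      ring
    have h1 : 1 ≤ ‖(1 + 2 * π * w * Complex.I : ℂ)‖ := by
      nlinarith [sq_nonneg (2 * π * w), norm_nonneg (1 + 2 * π * w * Complex.I : ℂ)]
    rw [norm_div, norm_pow, Complex.norm_natCast, div_eq_mul_inv, ← hsq]
    gcongr
    omega

/-- For an integer `k ≥ 2` and a real `a > 0`,
`∫_ℝ e^{-iax}(x+i)^{-k} dx = -2πi (-ia)^{k-1} e^{-a} / (k-1)!`. -/
theorem statement2 (k : ℕ) (hk : 2 ≤ k) (a : ℝ) (ha : 0 < a) :
    ∫ x : ℝ, Complex.exp (-Complex.I * a * x) / ((x : ℂ) + Complex.I) ^ k =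
      -2 * (Real.pi : ℂ) * Complex.I * (-Complex.I * a) ^ (k - 1) * Complex.exp (-a) /
        (Nat.factorial (k - 1) : ℂ) := by
  obtain ⟨n, rfl⟩ : ∃ n, k = n + 1 := ⟨k - 1, by omega⟩
  have hn : n ≠ 0 := by omega
  rw [Nat.add_sub_cancel]
  have hinv := congrFun ((continuous_gammaDensity n).fourierInv_fourier_eq
    (integrable_gammaDensity hn) (integrable_fourier_gammaDensity hn)) a
  rw [Real.fourierInv_eq', gammaDensity_of_nonneg n ha.le] at hinv
  have hsub := Measure.integral_comp_mul_left
    (fun x : ℝ => Complex.exp (-Complex.I * a * x) / ((x : ℂ) + Complex.I) ^ (n + 1)) (-(2 * π))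
  have hpt (w : ℝ) : Complex.exp (((2 * π * inner ℝ w a : ℝ) : ℂ) * Complex.I) •
        𝓕 (gammaDensity n) w =
      (n.factorial * Complex.I ^ (n + 1)) *
        (Complex.exp (-Complex.I * a * ((-(2 * π) * w : ℝ) : ℂ)) /
          (((-(2 * π) * w : ℝ) : ℂ) + Complex.I) ^ (n + 1)) := by
    have hfac : ((-(2 * π) * w : ℝ) : ℂ) + Complex.I =
        Complex.I * (1 + 2 * π * w * Complex.I) := by
      push_cast
      linear_combination (-(2 * π * w) : ℂ) * Complex.I_sq
    have hexp : ((2 * π * inner ℝ w a : ℝ) : ℂ) * Complex.I =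
        -Complex.I * a * ((-(2 * π) * w : ℝ) : ℂ) := by
      simp
      ring
    have hI : Complex.I ^ (n + 1) ≠ 0 := pow_ne_zero _ Complex.I_ne_zero
    rw [fourier_gammaDensity hn, hfac, hexp, mul_pow, smul_eq_mul]
    field_simp
  simp_rw [hpt] at hinv
  rw [integral_const_mul, hsub] at hinv
  have habs : |(-(2 * π))⁻¹| = (2 * π)⁻¹ := by
    rw [abs_inv, abs_neg, abs_of_pos (by positivity)]
  rw [habs, Complex.real_smul] at hinv
  have hI : (-Complex.I) ^ (n + 1) * Complex.I ^ (n + 1) = 1 := by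
    rw [← mul_pow]
    simp
  have hπ : (π : ℂ) ≠ 0 := by exact_mod_cast Real.pi_ne_zero
  have hfact : (n.factorial : ℂ) ≠ 0 := by exact_mod_cast n.factorial_ne_zero
  set J := ∫ x : ℝ, Complex.exp (-Complex.I * a * x) / ((x : ℂ) + Complex.I) ^ (n + 1)
  push_cast at hinv
  rw [eq_div_iff hfact, mul_pow]
  have h2 : (n.factorial : ℂ) * Complex.I ^ (n + 1) * J =
      2 * π * ((a : ℂ) ^ n * Complex.exp (-a)) := by
    rw [← hinv]
    field_simp
  linear_combination (-Complex.I) ^ (n + 1) * h2 - n.factorial * J * hI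
end

section
/- Let k be an integer with k ≥ 2 and let a be a real number with a ≤ 0. Then the Lebesgue (Bochner) integral over ℝ of the complex-valued function x ↦ e^{−i·a·x} / (x + i)^k equals 0; that is, ∫_ℝ e^{−iax}(x+i)^{−k} dx = 0. -/
open MeasureTheory Real

/-!
For `a ≤ 0` the integrand extends to `f z = exp (-i a z) / (z + i) ^ k`, holomorphic on the closed
upper half plane (its only pole is `-i`), where `‖exp (-i a z)‖ = exp (a * im z) ≤ 1`.
Cauchy's theorem on the rectangle `[-R, R] × [0, R]` expresses the integral over `[-R, R]` by the
integrals over the three other sides. There `‖z + i‖ ≥ R`, so `‖f z‖ ≤ 1 / R ^ 2` because `k ≥ 2`,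
and the three sides, of total length `4 R`, contribute at most `4 / R`, which tends to `0`.
-/

/-- The decay of the integrand in the upper half plane, away from the origin. -/
lemma norm_integrand_le {k : ℕ} (hk : 2 ≤ k) {a : ℝ} (ha : a ≤ 0) {R : ℝ} (hR : 1 ≤ R) {z : ℂ}
    (hz : 0 ≤ z.im) (hzR : R ≤ ‖z + Complex.I‖) :
    ‖Complex.exp (-Complex.I * a * z) / (z + Complex.I) ^ k‖ ≤ 1 / R ^ 2 := by
  have hexp : ‖Complex.exp (-Complex.I * a * z)‖ ≤ 1 := by
    rw [Complex.norm_exp, Real.exp_le_one_iff]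
    simpa using mul_nonpos_of_nonpos_of_nonneg ha hz
  have hpow : R ^ 2 ≤ ‖z + Complex.I‖ ^ k :=
    (pow_le_pow_right₀ hR hk).trans (pow_le_pow_left₀ (by linarith) hzR k)
  rw [norm_div, norm_pow]
  exact div_le_div₀ zero_le_one hexp (by positivity) hpow

/-- The contour estimate: Cauchy's theorem on the rectangle `[-R, R] × [0, R]`. -/
lemma norm_intervalIntegral_le {k : ℕ} (hk : 2 ≤ k) {a : ℝ} (ha : a ≤ 0) {R : ℝ} (hR : 1 ≤ R) :
    ‖∫ x in (-R)..R, Complex.exp (-Complex.I * a * x) / ((x : ℂ) + Complex.I) ^ k‖ ≤ 4 / R := by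
  set f : ℂ → ℂ := fun z => Complex.exp (-Complex.I * a * z) / (z + Complex.I) ^ k with hf
  have hR0 : 0 < R := by linarith
  have hd : DifferentiableOn ℂ f
      (Set.uIcc ((-R : ℝ) : ℂ).re (⟨R, R⟩ : ℂ).re ×ℂ
        Set.uIcc ((-R : ℝ) : ℂ).im (⟨R, R⟩ : ℂ).im) := by
    intro z hz
    have him : 0 ≤ z.im := by
      have h := hz.2
      simp only [Set.mem_preimage, Complex.ofReal_im, Set.uIcc_of_le hR0.le] at h
      exact h.1
    have hne : (z + Complex.I) ^ k ≠ 0 := by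
      refine pow_ne_zero _ fun h => ?_
      have := congrArg Complex.im h
      simp at this
      linarith
    refine DifferentiableAt.differentiableWithinAt (DifferentiableAt.div ?_ ?_ hne) <;> fun_prop
  have hC := Complex.integral_boundary_rect_eq_zero_of_differentiableOn f _ _ hd
  simp only [Complex.ofReal_re, Complex.ofReal_im, Complex.ofReal_zero, zero_mul, add_zero] at hC
  have htop : ‖∫ x in (-R)..R, f (x + R * Complex.I)‖ ≤ 1 / R ^ 2 * |R - -R| := by
    refine intervalIntegral.norm_integral_le_of_norm_le_const fun x _ => ?_
    refine norm_integrand_le hk ha hR (by simpa using hR0.le) ?_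
    refine le_trans ?_ (Complex.abs_im_le_norm _)
    simpa using le_trans (by linarith) (le_abs_self (R + 1))
  have hside : ∀ s : ℝ, |s| = R →
      ‖∫ y in (0 : ℝ)..R, f (s + y * Complex.I)‖ ≤ 1 / R ^ 2 * |R - 0| := by
    intro s hs
    refine intervalIntegral.norm_integral_le_of_norm_le_const fun y hy => ?_
    rw [Set.uIoc_of_le hR0.le] at hy
    refine norm_integrand_le hk ha hR (by simpa using hy.1.le) ?_
    refine le_trans ?_ (Complex.abs_re_le_norm _)
    simp [hs]
  have h1 := hside R (abs_of_pos hR0)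
  have h2 := hside (-R) (by rw [abs_neg, abs_of_pos hR0])
  have hdecomp : ∫ x in (-R)..R, f x = (∫ x in (-R)..R, f (x + R * Complex.I))
      - Complex.I • (∫ y in (0 : ℝ)..R, f ((R : ℝ) + y * Complex.I))
      + Complex.I • (∫ y in (0 : ℝ)..R, f ((-R : ℝ) + y * Complex.I)) := by
    linear_combination hC
  change ‖∫ x in (-R)..R, f x‖ ≤ 4 / R
  rw [hdecomp]
  refine (norm_add_le _ _).trans ((add_le_add_left (norm_sub_le _ _) _).trans ?_)
  rw [norm_smul, norm_smul, Complex.norm_I, one_mul, one_mul]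
  have e1 : |R - -R| = 2 * R := by rw [abs_of_pos] <;> linarith
  have e2 : |R - 0| = R := by rw [sub_zero, abs_of_pos hR0]
  rw [e1] at htop
  rw [e2] at h1 h2
  have e3 : 4 / R = 1 / R ^ 2 * (2 * R) + 1 / R ^ 2 * R + 1 / R ^ 2 * R := by
    field_simp
    norm_num
  linarith

/-- For an integer `k ≥ 2` and a real `a ≤ 0`, `∫_ℝ e^{-iax}(x+i)^{-k} dx = 0`. -/
theorem statement3 (k : ℕ) (hk : 2 ≤ k) (a : ℝ) (ha : a ≤ 0) :
    ∫ x : ℝ, Complex.exp (-Complex.I * a * x) / ((x : ℂ) + Complex.I) ^ k = 0 := by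
  -- The integrand is dominated by `(1 + x ^ 2)⁻¹`.
  have hint : Integrable fun x : ℝ =>
      Complex.exp (-Complex.I * a * x) / ((x : ℂ) + Complex.I) ^ k := by
    have hne : ∀ x : ℝ, ((x : ℂ) + Complex.I) ^ k ≠ 0 := fun x => by
      refine pow_ne_zero _ fun h => ?_
      simpa using congrArg Complex.im h
    refine integrable_inv_one_add_sq.mono'
      (Continuous.aestronglyMeasurable (Continuous.div (by fun_prop) (by fun_prop) hne))
      (Filter.Eventually.of_forall fun x => ?_)
    have hexp : ‖Complex.exp (-Complex.I * a * x)‖ = 1 := by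
      rw [Complex.norm_exp]
      simp
    have hsq : ‖(x : ℂ) + Complex.I‖ ^ 2 = 1 + x ^ 2 := by
      rw [Complex.sq_norm, Complex.normSq_apply]
      simp
      ring
    have h1 : 1 ≤ ‖(x : ℂ) + Complex.I‖ := by
      simpa using Complex.abs_im_le_norm ((x : ℂ) + Complex.I)
    rw [norm_div, norm_pow, hexp, one_div, ← hsq]
    exact inv_anti₀ (by positivity) (pow_le_pow_right₀ h1 hk)
  have hlim := intervalIntegral_tendsto_integral hint Filter.tendsto_neg_atTop_atBot
    Filter.tendsto_id
  refine tendsto_nhds_unique hlim (squeeze_zero_norm' ?_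
    ((tendsto_const_nhds (x := (4 : ℝ))).div_atTop Filter.tendsto_id))
  filter_upwards [Filter.eventually_ge_atTop 1] with R hR
  exact norm_intervalIntegral_le hk ha hR
end

section
/- Let k be an integer with k ≥ 2, let y be a real number with y > 0, and let β be a real number. Then Γ(k) · (−2πi)^{−k} · y^{1−k} · ∫_ℝ e^{−2πi·β·y·z} (z+i)^{−k} dz = β^{k−1} · e^{−2πβy} if β > 0, and the same left-hand side equals 0 if β ≤ 0. Here the integral is over the real variable z and Γ(k) = (k−1)!. -/
/-!
Put `k = n + 1` and `f t = t₊ ^ n * exp (-2πt)`, a function which is continuous on `ℝ` because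
`n ≥ 1`. The Laplace transform `∫₀^∞ t ^ n * exp (-c t) dt = n! / c ^ (n + 1)`, evaluated at
`c = -2πi (z + i)`, shows that the inverse Fourier transform of `f` is
`z ↦ Γ(k) (-2πi)⁻ᵏ (z + i)⁻ᵏ`. This is integrable because `k ≥ 2`, so Fourier inversion gives
`Γ(k) (-2πi)⁻ᵏ ∫ exp (-2πi b z) (z + i)⁻ᵏ dz = f b` for every real `b`; the theorem is the case
`b = β y`, where the factor `y ^ (1 - k)` cancels the power of `y` in `f (β y)`.
-/

open MeasureTheory Real
open scoped FourierTransform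

theorem integrableOn_pow_mul_cexp_neg (n : ℕ) {c : ℂ} (hc : 0 < c.re) :
    IntegrableOn (fun t : ℝ ↦ (t : ℂ) ^ n * Complex.exp (-c * t)) (Set.Ioi 0) := by
  have h := integrableOn_rpow_mul_exp_neg_mul_rpow (p := 1) (s := n) (b := c.re)
    (by have : (0 : ℝ) ≤ n := n.cast_nonneg
        linarith) one_pos hc
  refine Integrable.mono h (by fun_prop) ?_
  refine Filter.Eventually.of_forall fun t ↦ le_of_eq ?_
  simp [Complex.norm_exp]

theorem tendsto_pow_mul_cexp_neg_atTop (n : ℕ) {c : ℂ} (hc : 0 < c.re) :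
    Filter.Tendsto (fun t : ℝ ↦ (t : ℂ) ^ n * Complex.exp (-c * t)) Filter.atTop (nhds 0) := by
  rw [tendsto_zero_iff_norm_tendsto_zero]
  refine (tendsto_rpow_mul_exp_neg_mul_atTop_nhds_zero n c.re hc).congr' ?_
  filter_upwards [Filter.eventually_ge_atTop 0] with t ht
  simp [Complex.norm_exp, abs_of_nonneg ht]

/-- The Laplace transform of `t ^ n`, at a complex point of the right half-plane. -/
theorem integral_pow_mul_cexp_neg (n : ℕ) {c : ℂ} (hc : 0 < c.re) :
    ∫ t : ℝ in Set.Ioi 0, (t : ℂ) ^ n * Complex.exp (-c * t) = n.factorial / c ^ (n + 1) := by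
  have hc0 : c ≠ 0 := by
    rintro rfl
    simp at hc
  induction n with
  | zero =>
    have := integral_exp_mul_complex_Ioi (a := -c) (by simpa using hc) 0
    simpa using this
  | succ n ih =>
    -- The derivative of `t ^ (n + 1) * exp (-c t)` has integral zero over `(0, ∞)`.
    have hd : ∀ t ∈ Set.Ici (0 : ℝ),
        HasDerivAt (fun t : ℝ ↦ (t : ℂ) ^ (n + 1) * Complex.exp (-c * t))
          ((n + 1) * ((t : ℂ) ^ n * Complex.exp (-c * t)) -
            c * ((t : ℂ) ^ (n + 1) * Complex.exp (-c * t))) t := by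
      intro t _
      have h1 : HasDerivAt (fun z : ℂ ↦ z ^ (n + 1) * Complex.exp (-c * z)) _ (t : ℂ) :=
        (hasDerivAt_pow (n + 1) (t : ℂ)).mul ((hasDerivAt_id' (t : ℂ)).const_mul (-c)).cexp
      convert! h1.comp_ofReal using 1
      push_cast
      ring
    have hi := (integrableOn_pow_mul_cexp_neg n hc).const_mul ((n : ℂ) + 1)
    have hi' := (integrableOn_pow_mul_cexp_neg (n + 1) hc).const_mul c
    have key := integral_Ioi_of_hasDerivAt_of_tendsto' hd (hi.sub hi')
      (tendsto_pow_mul_cexp_neg_atTop (n + 1) hc)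
    rw [integral_sub hi hi', integral_const_mul, integral_const_mul, ih] at key
    have key' : c * ∫ t : ℝ in Set.Ioi 0, (t : ℂ) ^ (n + 1) * Complex.exp (-c * t) =
        (n + 1) * (n.factorial / c ^ (n + 1)) := by
      simp only [Complex.ofReal_zero, ne_eq, Nat.add_eq_zero_iff, one_ne_zero, and_false,
        not_false_eq_true, zero_pow, zero_mul, sub_zero] at key
      exact (sub_eq_zero.mp key).symm
    apply mul_left_cancel₀ hc0
    rw [key', Nat.factorial_succ]
    push_cast
    field_simp
    ring

/-- The function `t₊ ^ n * exp (-2πt)`. Writing the positive part as `max t 0` makes continuity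
immediate; for `n ≥ 1` the function vanishes for `t ≤ 0`. -/
noncomputable def whittakerKernel (n : ℕ) (t : ℝ) : ℂ :=
  ((max t 0 : ℝ) : ℂ) ^ n * Complex.exp (-(2 * π : ℂ) * t)

theorem continuous_whittakerKernel (n : ℕ) : Continuous (whittakerKernel n) := by
  unfold whittakerKernel
  fun_prop

theorem whittakerKernel_eq_indicator {n : ℕ} (hn : n ≠ 0) :
    whittakerKernel n = (Set.Ioi (0 : ℝ)).indicator
      (fun t : ℝ ↦ (t : ℂ) ^ n * Complex.exp (-(2 * π : ℂ) * t)) := by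
  ext t
  by_cases ht : 0 < t
  · rw [Set.indicator_of_mem (Set.mem_Ioi.mpr ht), whittakerKernel, max_eq_left ht.le]
  · rw [Set.indicator_of_notMem (by simpa using ht), whittakerKernel, max_eq_right (not_lt.mp ht)]
    simp [hn]

theorem integrable_whittakerKernel {n : ℕ} (hn : n ≠ 0) : Integrable (whittakerKernel n) := by
  rw [whittakerKernel_eq_indicator hn, integrable_indicator_iff measurableSet_Ioi]
  exact integrableOn_pow_mul_cexp_neg n (by simpa using pi_pos)

theorem fourierInv_whittakerKernel {n : ℕ} (hn : n ≠ 0) :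
    𝓕⁻ (whittakerKernel n) = fun z : ℝ ↦
      n.factorial * (-2 * (π : ℂ) * Complex.I) ^ (-((n + 1 : ℕ) : ℤ)) *
        ((z : ℂ) + Complex.I) ^ (-((n + 1 : ℕ) : ℤ)) := by
  ext z
  have hc : (-2 * (π : ℂ) * Complex.I) * ((z : ℂ) + Complex.I) =
      2 * π - 2 * π * z * Complex.I := by
    linear_combination (-2 * (π : ℂ)) * Complex.I_sq
  have hre : 0 < ((-2 * (π : ℂ) * Complex.I) * ((z : ℂ) + Complex.I)).re := by
    rw [hc]
    simpa using pi_pos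
  have h := integral_pow_mul_cexp_neg n hre
  rw [Real.fourierInv_eq', mul_assoc, ← mul_zpow, zpow_neg, zpow_natCast, ← div_eq_mul_inv, ← h,
    ← integral_indicator measurableSet_Ioi, whittakerKernel_eq_indicator hn]
  congr 1
  ext t
  by_cases ht : 0 < t
  · rw [Set.indicator_of_mem (Set.mem_Ioi.mpr ht), Set.indicator_of_mem (Set.mem_Ioi.mpr ht), hc,
      smul_eq_mul, mul_left_comm, ← Complex.exp_add]
    congr 2
    simp only [RCLike.inner_apply, conj_trivial]
    push_cast
    ring
  · rw [Set.indicator_of_notMem (by simpa using ht), Set.indicator_of_notMem (by simpa using ht),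
      smul_zero]

theorem integrable_add_I_zpow_neg {n : ℕ} (hn : n ≠ 0) :
    Integrable (fun z : ℝ ↦ ((z : ℂ) + Complex.I) ^ (-((n + 1 : ℕ) : ℤ))) := by
  have hne : ∀ z : ℝ, (z : ℂ) + Complex.I ≠ 0 := fun z hz ↦ by
    simpa using congrArg Complex.im hz
  have hsq : ∀ z : ℝ, ‖(z : ℂ) + Complex.I‖ ^ 2 = 1 + z ^ 2 := fun z ↦ by
    rw [← Complex.normSq_eq_norm_sq, Complex.normSq_apply]
    simp
    ring
  refine integrable_inv_one_add_sq.mono' ?_ (Filter.Eventually.of_forall fun z ↦ ?_)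
  · refine Continuous.aestronglyMeasurable ?_
    exact Continuous.zpow₀ (by fun_prop) _ fun z ↦ Or.inl (hne z)
  · have h1 : 1 ≤ ‖(z : ℂ) + Complex.I‖ := by
      nlinarith [hsq z, sq_nonneg z, norm_nonneg ((z : ℂ) + Complex.I)]
    rw [zpow_neg, zpow_natCast, norm_inv, norm_pow, ← hsq]
    exact inv_anti₀ (by positivity) (pow_le_pow_right₀ h1 (by omega))

/-- Fourier inversion for `whittakerKernel`. -/
theorem integral_cexp_mul_add_I_zpow_neg {n : ℕ} (hn : n ≠ 0) (b : ℝ) :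
    n.factorial * (-2 * (π : ℂ) * Complex.I) ^ (-((n + 1 : ℕ) : ℤ)) *
      ∫ z : ℝ, Complex.exp (-2 * (π : ℂ) * Complex.I * b * z) *
        ((z : ℂ) + Complex.I) ^ (-((n + 1 : ℕ) : ℤ)) = whittakerKernel n b := by
  have hint : Integrable (𝓕⁻ (whittakerKernel n)) := by
    rw [fourierInv_whittakerKernel hn]
    exact (integrable_add_I_zpow_neg hn).const_mul _
  have hint' : Integrable (𝓕 (whittakerKernel n)) := by
    have h := hint.comp_neg
    simpa [Real.fourierInv_eq_fourier_neg] using h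
  rw [← congrFun ((continuous_whittakerKernel n).fourier_fourierInv_eq
      (integrable_whittakerKernel hn) hint') b,
    Real.fourier_eq', fourierInv_whittakerKernel hn, ← integral_const_mul]
  congr 1
  ext z
  have hE : ((-2 * π * inner ℝ z b : ℝ) : ℂ) * Complex.I =
      -2 * (π : ℂ) * Complex.I * b * z := by
    simp only [RCLike.inner_apply, conj_trivial]
    push_cast
    ring
  rw [smul_eq_mul, hE, mul_left_comm]

/-- For an integer `k ≥ 2`, a real `y > 0` and a real `β`,
`Γ(k) (-2πi)^{-k} y^{1-k} ∫_ℝ e^{-2πiβyz}(z+i)^{-k} dz` equals `β^{k-1} e^{-2πβy}`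
if `β > 0` and equals `0` if `β ≤ 0`. -/
theorem statement4 (k : ℤ) (hk : 2 ≤ k) (y : ℝ) (hy : 0 < y) (β : ℝ) :
    Complex.Gamma (k : ℂ) * (-2 * (Real.pi : ℂ) * Complex.I) ^ (-k) * (y : ℂ) ^ (1 - k) *
      ∫ z : ℝ, Complex.exp (-2 * (Real.pi : ℂ) * Complex.I * β * y * z) *
        ((z : ℂ) + Complex.I) ^ (-k) =
    if 0 < β then (β : ℂ) ^ (k - 1) * Complex.exp (-2 * (Real.pi : ℂ) * β * y) else 0 := by
  obtain ⟨n, rfl⟩ : ∃ n : ℕ, k = ((n + 1 : ℕ) : ℤ) := ⟨(k - 1).toNat, by omega⟩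
  have hn : n ≠ 0 := by omega
  have hy0 : (y : ℂ) ≠ 0 := by exact_mod_cast hy.ne'
  have h := integral_cexp_mul_add_I_zpow_neg hn (β * y)
  have hexp : ∀ z : ℝ, -2 * (π : ℂ) * Complex.I * ((β * y : ℝ) : ℂ) * z =
      -2 * (π : ℂ) * Complex.I * β * y * z := fun z ↦ by
    push_cast
    ring
  simp only [hexp] at h
  have hG : Complex.Gamma (((n + 1 : ℕ) : ℤ) : ℂ) = n.factorial := by
    push_cast
    exact Complex.Gamma_nat_eq_factorial n
  have e1 : (1 : ℤ) - ((n + 1 : ℕ) : ℤ) = -(n : ℤ) := by omega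
  have e2 : ((n + 1 : ℕ) : ℤ) - 1 = (n : ℤ) := by omega
  rw [hG, mul_right_comm, h, e1, e2, zpow_neg, zpow_natCast, zpow_natCast,
    whittakerKernel_eq_indicator hn]
  split_ifs with hβ
  · rw [Set.indicator_of_mem (Set.mem_Ioi.mpr (mul_pos hβ hy))]
    have hE : -(2 * π : ℂ) * ((β * y : ℝ) : ℂ) = -2 * (π : ℂ) * β * y := by
      push_cast
      ring
    rw [hE]
    push_cast
    rw [mul_pow]
    field_simp
  · rw [Set.indicator_of_notMem, zero_mul]
    exact not_lt.mpr (mul_nonpos_of_nonpos_of_nonneg (not_lt.mp hβ) hy.le)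
end
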